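/- The τ-function satisfies τ = Ṽ_{−δ}·τ̃, τ = V̂_{−ε}·τ̂, and τ = V̄_{−λ}·τ̄, where V_α = 1 − sᵀ(1+CM)^{−1}C(χ_{α,K}(ξ))^{−1}r and Ṽ_{−δ}, V̂_{−ε}, V̄_{−λ} denote V_{−δ}, V_{−ε}, V_{−λ} evaluated at (n+1,m,h), (n,m+1,h), (n,m,h+1) respectively. In particular, whenever τ ≠ 0, W_δ·Ṽ_{−δ} = 1, where W_δ = 1 − sᵀ(χ_{δ,K′}(ξ))^{−1}C(1+MC)^{−1}r. -/

import Mathlib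

open scoped BigOperators

noncomputable section

/-- A period lattice in `ℂ` spanned by two `ℝ`-independent periods. -/
structure EllLattice where
  ω₁ : ℂ
  ω₂ : ℂ
  indep : ∀ a b : ℝ, a • ω₁ + b • ω₂ = 0 → a = 0 ∧ b = 0

namespace EllLattice

/-- Membership in the lattice `Λ = ℤω₁ + ℤω₂`. -/
def mem (L : EllLattice) (z : ℂ) : Prop := ∃ m n : ℤ, z = m • L.ω₁ + n • L.ω₂

/-- The lattice point with integer coordinates `p = (m, n)`. -/
def per (L : EllLattice) (p : ℤ × ℤ) : ℂ := p.1 • L.ω₁ + p.2 • L.ω₂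

/-- The Weierstrass sigma function associated to the lattice, defined by its
Hadamard product over the nonzero lattice points. -/
def sigma (L : EllLattice) (z : ℂ) : ℂ :=
  z * ∏' p : {p : ℤ × ℤ // p ≠ 0},
      ((1 - z / L.per p.1) *
        Complex.exp (z / L.per p.1 + z ^ 2 / (2 * (L.per p.1) ^ 2)))

/-- The Weierstrass zeta function `ζ = σ′/σ`. -/
def zeta (L : EllLattice) (z : ℂ) : ℂ := deriv L.sigma z / L.sigma z

/-- The Weierstrass `℘`-function `℘ = −ζ′`. -/
def wp (L : EllLattice) (z : ℂ) : ℂ := - deriv L.zeta z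

/-- `Φ_ξ(κ) = σ(ξ+κ)/(σ(ξ)σ(κ))`. -/
def Phi (L : EllLattice) (ξ κ : ℂ) : ℂ := L.sigma (ξ + κ) / (L.sigma ξ * L.sigma κ)

/-- The Lamé function `Ψ_ξ(κ) = Φ_ξ(κ)·e^{−ζ(ξ)κ}`. -/
def Psi (L : EllLattice) (ξ κ : ℂ) : ℂ := L.Phi ξ κ * Complex.exp (-(L.zeta ξ) * κ)

/-- `η_δ(ξ) = ζ(ξ+δ) − ζ(ξ) − ζ(δ)`. -/
def eta (L : EllLattice) (δ ξ : ℂ) : ℂ := L.zeta (ξ + δ) - L.zeta ξ - L.zeta δ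

/-- `χ_{α,β}(ξ) = ζ(α) + ζ(β) + ζ(ξ) − ζ(ξ+α+β)`. -/
def chi (L : EllLattice) (α β ξ : ℂ) : ℂ :=
  L.zeta α + L.zeta β + L.zeta ξ - L.zeta (ξ + α + β)

end EllLattice

open Matrix

/-- All the data entering the elliptic (N,N′)-soliton solutions of the lattice KP system:
a period lattice, lattice parameters `δ, ε, λ`, a base point `ξ₀`, rapidity parameters
`κ_i, κ′_j`, initial plane-wave constants `ρ⁰_i, ν⁰_j` and a constant `N′×N` matrix `C`. -/
structure KPData (N N' : ℕ) where
  L : EllLattice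
  del : ℂ
  eps : ℂ
  lam : ℂ
  xi0 : ℂ
  κ : Fin N → ℂ
  κ' : Fin N' → ℂ
  ρ0 : Fin N → ℂ
  ν0 : Fin N' → ℂ
  C : Matrix (Fin N') (Fin N) ℂ

namespace KPData

variable {N N' : ℕ}

/-- `ξ = ξ₀ + nδ + mε + hλ`. -/
def xi (D : KPData N N') (n m h : ℤ) : ℂ :=
  D.xi0 + n • D.del + m • D.eps + h • D.lam

/-- The plane-wave factor `ρ_i(n,m,h)`. -/
def ρ (D : KPData N N') (i : Fin N) (n m h : ℤ) : ℂ :=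
  (Complex.exp (-(D.L.zeta D.del) * D.κ i) * D.L.Psi D.del (-(D.κ i))) ^ n *
  (Complex.exp (-(D.L.zeta D.eps) * D.κ i) * D.L.Psi D.eps (-(D.κ i))) ^ m *
  (Complex.exp (-(D.L.zeta D.lam) * D.κ i) * D.L.Psi D.lam (-(D.κ i))) ^ h *
  Complex.exp (D.L.zeta (D.xi n m h) * D.κ i) * D.ρ0 i

/-- The plane-wave factor `ν_j(n,m,h)`. -/
def ν (D : KPData N N') (j : Fin N') (n m h : ℤ) : ℂ :=
  (Complex.exp (D.L.zeta D.del * D.κ' j) * D.L.Psi D.del (D.κ' j)) ^ (-n) *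
  (Complex.exp (D.L.zeta D.eps * D.κ' j) * D.L.Psi D.eps (D.κ' j)) ^ (-m) *
  (Complex.exp (D.L.zeta D.lam * D.κ' j) * D.L.Psi D.lam (D.κ' j)) ^ (-h) *
  Complex.exp (D.L.zeta (D.xi n m h) * D.κ' j) * D.ν0 j

/-- The dressed elliptic Cauchy matrix `M_{ij} = ρ_i Ψ_ξ(κ_i + κ′_j) ν_j`. -/
def M (D : KPData N N') (n m h : ℤ) : Matrix (Fin N) (Fin N') ℂ :=
  Matrix.of fun i j => D.ρ i n m h * D.L.Psi (D.xi n m h) (D.κ i + D.κ' j) * D.ν j n m h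

/-- The column vector `r = (ρ_i Ψ_ξ(κ_i))_i`. -/
def r (D : KPData N N') (n m h : ℤ) : Fin N → ℂ :=
  fun i => D.ρ i n m h * D.L.Psi (D.xi n m h) (D.κ i)

/-- The column vector `s = (ν_j Ψ_ξ(κ′_j))_j`. -/
def s (D : KPData N N') (n m h : ℤ) : Fin N' → ℂ :=
  fun j => D.ν j n m h * D.L.Psi (D.xi n m h) (D.κ' j)

/-- The τ-function `τ = det(1 + MC)`. -/
def τ (D : KPData N N') (n m h : ℤ) : ℂ := (1 + D.M n m h * D.C).det

/-- The diagonal matrix `χ_{α,K}(ξ) = diag(χ_{α,κ_i}(ξ))`. -/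
def DK (D : KPData N N') (α : ℂ) (n m h : ℤ) : Matrix (Fin N) (Fin N) ℂ :=
  Matrix.diagonal fun i => D.L.chi α (D.κ i) (D.xi n m h)

/-- The diagonal matrix `χ_{β,K′}(ξ) = diag(χ_{β,κ′_j}(ξ))`. -/
def DK' (D : KPData N N') (β : ℂ) (n m h : ℤ) : Matrix (Fin N') (Fin N') ℂ :=
  Matrix.diagonal fun j => D.L.chi β (D.κ' j) (D.xi n m h)

/-- `W_β = 1 − sᵀ (χ_{β,K′}(ξ))⁻¹ C (1+MC)⁻¹ r`. -/
def W (D : KPData N N') (β : ℂ) (n m h : ℤ) : ℂ :=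
  1 - D.s n m h ⬝ᵥ ((D.DK' β n m h)⁻¹ *ᵥ (D.C *ᵥ ((1 + D.M n m h * D.C)⁻¹ *ᵥ D.r n m h)))

/-- `V_α = 1 − sᵀ (1+CM)⁻¹ C (χ_{α,K}(ξ))⁻¹ r`. -/
def V (D : KPData N N') (α : ℂ) (n m h : ℤ) : ℂ :=
  1 - D.s n m h ⬝ᵥ ((1 + D.C * D.M n m h)⁻¹ *ᵥ (D.C *ᵥ ((D.DK α n m h)⁻¹ *ᵥ D.r n m h)))

/-- `w₀ = sᵀ C (1+MC)⁻¹ r`. -/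
def w0 (D : KPData N N') (n m h : ℤ) : ℂ :=
  D.s n m h ⬝ᵥ (D.C *ᵥ ((1 + D.M n m h * D.C)⁻¹ *ᵥ D.r n m h))

/-- `w = ζ(ξ) − w₀ − nζ(δ) − mζ(ε) − hζ(λ)`. -/
def w (D : KPData N N') (n m h : ℤ) : ℂ :=
  D.L.zeta (D.xi n m h) - D.w0 n m h - n • D.L.zeta D.del - m • D.L.zeta D.eps -
    h • D.L.zeta D.lam

/-- `S_{β,α} = sᵀ (χ_{β,K′}(ξ))⁻¹ C (1+MC)⁻¹ (χ_{α,K}(ξ))⁻¹ r`. -/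
def S (D : KPData N N') (β α : ℂ) (n m h : ℤ) : ℂ :=
  D.s n m h ⬝ᵥ ((D.DK' β n m h)⁻¹ *ᵥ
    (D.C *ᵥ ((1 + D.M n m h * D.C)⁻¹ *ᵥ ((D.DK α n m h)⁻¹ *ᵥ D.r n m h))))

/-- `u_α = (1+MC)⁻¹ (χ_{α,K}(ξ))⁻¹ r`. -/
def u (D : KPData N N') (α : ℂ) (n m h : ℤ) : Fin N → ℂ :=
  (1 + D.M n m h * D.C)⁻¹ *ᵥ ((D.DK α n m h)⁻¹ *ᵥ D.r n m h)

/-- `u₀ = (1+MC)⁻¹ r`. -/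
def u0 (D : KPData N N') (n m h : ℤ) : Fin N → ℂ :=
  (1 + D.M n m h * D.C)⁻¹ *ᵥ D.r n m h

/-- the adjoint (row) vector `ᵗu_β = sᵀ (χ_{β,K′}(ξ))⁻¹ (1+CM)⁻¹`. -/
def tu (D : KPData N N') (β : ℂ) (n m h : ℤ) : Fin N' → ℂ :=
  (D.s n m h ᵥ* (D.DK' β n m h)⁻¹) ᵥ* (1 + D.C * D.M n m h)⁻¹

/-- the adjoint (row) vector `ᵗu₀ = sᵀ (1+CM)⁻¹`. -/
def tu0 (D : KPData N N') (n m h : ℤ) : Fin N' → ℂ :=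
  D.s n m h ᵥ* (1 + D.C * D.M n m h)⁻¹

/-- The gauge variable `𝒱_α = Φ_ξ(α)·V_α`. -/
def calV (D : KPData N N') (α : ℂ) (n m h : ℤ) : ℂ :=
  D.L.Phi (D.xi n m h) α * D.V α n m h

/-- The gauge variable `𝒲_β = Φ_ξ(β)·W_β`. -/
def calW (D : KPData N N') (β : ℂ) (n m h : ℤ) : ℂ :=
  D.L.Phi (D.xi n m h) β * D.W β n m h

/-- The Schwarzian variable `Z_{β,α} = Φ_ξ(α+β)·(1 − χ_{α,β}(ξ)·S_{β,α})`. -/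
def Z (D : KPData N N') (β α : ℂ) (n m h : ℤ) : ℂ :=
  D.L.Phi (D.xi n m h) (α + β) * (1 - D.L.chi α β (D.xi n m h) * D.S β α n m h)

/-- Genericity of the parameters (together with finitely many auxiliary points `extra`):
no nontrivial integer combination of `ξ₀, δ, ε, λ`, the rapidity parameters and the
auxiliary points lies on the lattice.  In particular all arguments of `σ` occurring in
the soliton solutions and their shifts lie outside `Λ`. -/
def Generic {P : ℕ} (D : KPData N N') (extra : Fin P → ℂ) : Prop :=
  ∀ (c0 cn cm ch : ℤ) (a : Fin N → ℤ) (b : Fin N' → ℤ) (e : Fin P → ℤ),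
    ¬ (c0 = 0 ∧ cn = 0 ∧ cm = 0 ∧ ch = 0 ∧ a = 0 ∧ b = 0 ∧ e = 0) →
    ¬ D.L.mem (c0 • D.xi0 + cn • D.del + cm • D.eps + ch • D.lam +
      (∑ i, a i • D.κ i) + (∑ j, b j • D.κ' j) + ∑ t, e t • extra t)

end KPData

/-!
Along a lattice step `ξ ↦ ξ + y` the dressed Cauchy matrix changes by a rank-one term,
`M̃ = M - r s̃ᵀ`; entrywise this is the Fay identity for `Φ`. The matrix determinant lemma then
gives `τ = (1 + s̃ᵀ(1 + C M̃)⁻¹ C r) τ̃` and `τ̃ = (1 - s̃ᵀ C (1 + M C)⁻¹ r) τ`. The bracketed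
factors are `Ṽ_{-y}` and `W_y`, because `Φ_ξ(κ) Φ_y(κ) = Φ_{ξ+y}(κ) χ_{y,κ}(ξ)` means
`χ_{-y,K}(ξ̃)⁻¹ r̃ = -r` and `sᵀ χ_{y,K'}(ξ)⁻¹ = s̃ᵀ`. The Fay identity and the formula for `χ`
both come from the three-term identity for `σ`, the latter by differentiating it. The three-term
identity is an instance of Liouville's theorem, once `σ` is known to be quasi-periodic with simple
zeros exactly on `Λ`.
-/

section RankOneUpdate

variable {R m n : Type*} [CommRing R] [Fintype m] [DecidableEq m] [Fintype n]

lemma det_one_add_add_vecMulVec_mul {M : Matrix m n R} {C : Matrix n m R}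
    (hMC : IsUnit (1 + M * C).det) (u : m → R) (v : n → R) :
    (1 + (M + vecMulVec u v) * C).det =
      (1 + v ⬝ᵥ (C *ᵥ ((1 + M * C)⁻¹ *ᵥ u))) * (1 + M * C).det := by
  rw [Matrix.add_mul, vecMulVec_mul, ← add_assoc, vecMulVec_eq Unit,
    det_add_replicateCol_mul_replicateRow hMC, mul_comm, dotProduct_mulVec, dotProduct_mulVec,
    det_unique, Matrix.add_apply, one_apply_eq, ← replicateRow_vecMul,
    replicateRow_mul_replicateCol_apply]

lemma mul_inv_one_add_mul [DecidableEq n] {M : Matrix m n R} {C : Matrix n m R}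
    (hMC : IsUnit (1 + M * C).det) : C * (1 + M * C)⁻¹ = (1 + C * M)⁻¹ * C := by
  have hCM : IsUnit (1 + C * M).det := by rwa [det_one_add_mul_comm]
  have hcomm : (1 + C * M) * C = C * (1 + M * C) := by
    rw [Matrix.add_mul, Matrix.mul_add, Matrix.one_mul, Matrix.mul_one, Matrix.mul_assoc]
  rw [← nonsing_inv_mul_cancel_left _ (C * (1 + M * C)⁻¹) hCM, ← Matrix.mul_assoc _ C, hcomm,
    mul_nonsing_inv_cancel_right _ _ hMC]

end RankOneUpdate

section SimpleZeros

open Filter Topology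

lemma dense_ne_zero_of_deriv_ne_zero {𝕜 E : Type*} [NontriviallyNormedField 𝕜]
    [NormedAddCommGroup E] [NormedSpace 𝕜 E] {f : 𝕜 → E} (hf : ∀ z, f z = 0 → deriv f z ≠ 0) :
    Dense {z | f z ≠ 0} := fun z => by
  by_cases hz : f z = 0
  · exact mem_closure_iff_frequently.2 (Frequently.filter_mono
      ((differentiableAt_of_deriv_ne_zero (hf z hz)).hasDerivAt.eventually_ne
        (hf z hz)).frequently nhdsWithin_le_nhds)
  · exact subset_closure hz

variable {F D : ℂ → ℂ}

lemma differentiableAt_ite_deriv_div_deriv (hF : Differentiable ℂ F) (hD : Differentiable ℂ D)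
    {z : ℂ} (hFz : F z = 0) (hDz : D z = 0) (hD' : deriv D z ≠ 0) :
    DifferentiableAt ℂ (fun x => if D x = 0 then deriv F x / deriv D x else F x / D x) z := by
  have hslope : ∀ {G : ℂ → ℂ}, Differentiable ℂ G → DifferentiableAt ℂ (dslope G z) z :=
    fun hG => ((Complex.differentiableOn_dslope univ_mem).2 hG.differentiableOn).differentiableAt
      univ_mem
  refine DifferentiableAt.congr_of_eventuallyEq
    ((hslope hF).div (hslope hD) (by rwa [dslope_same])) ?_
  have hne : ∀ᶠ x in 𝓝[≠] z, D x ≠ 0 := (hD z).hasDerivAt.eventually_ne hD'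
  filter_upwards [eventually_nhdsWithin_iff.1 hne] with x hx
  rcases eq_or_ne x z with rfl | hxz
  · simp [hDz]
  · simp only [if_neg (hx hxz), Pi.div_apply, dslope_of_ne _ hxz, slope_def_field, hFz, hDz,
      sub_zero, div_div_div_cancel_right₀ (sub_ne_zero.2 hxz)]

lemma exists_differentiable_eq_mul (hF : Differentiable ℂ F) (hD : Differentiable ℂ D)
    (hzero : ∀ z, D z = 0 → F z = 0 ∧ deriv D z ≠ 0) :
    ∃ Q : ℂ → ℂ, Differentiable ℂ Q ∧ ∀ z, F z = Q z * D z := by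
  refine ⟨fun z => if D z = 0 then deriv F z / deriv D z else F z / D z, fun z => ?_, fun z => ?_⟩
  · by_cases hz : D z = 0
    · exact differentiableAt_ite_deriv_div_deriv hF hD (hzero z hz).1 hz (hzero z hz).2
    · refine ((hF z).fun_div (hD z) hz).congr_of_eventuallyEq ?_
      filter_upwards [(hD z).continuousAt.eventually_ne hz] with x hx
      exact if_neg hx
  · by_cases hz : D z = 0
    · rw [hz, (hzero z hz).1, mul_zero]
    · simp only [if_neg hz, div_mul_cancel₀ _ hz]

end SimpleZeros

namespace EllLattice

open Filter Topology

variable (L : EllLattice)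

section Lattice

/-- The two periods as a Mathlib `PeriodPair`, giving access to the lattice sums behind `℘`. -/
def toPeriodPair : PeriodPair where
  ω₁ := L.ω₁
  ω₂ := L.ω₂
  indep := LinearIndependent.pair_iff.2 L.indep

/-- The period lattice `Λ` as a subgroup of `ℂ`. -/
abbrev lattice : Submodule ℤ ℂ := L.toPeriodPair.lattice

variable {L}

lemma mem_iff_mem_lattice {z : ℂ} : L.mem z ↔ z ∈ L.lattice := by
  simp only [mem, PeriodPair.mem_lattice, zsmul_eq_mul, toPeriodPair, eq_comm]

variable (L)

lemma countable_lattice : (L.lattice : Set ℂ).Countable :=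
  Set.countable_coe_iff.1 L.toPeriodPair.latticeEquivProd.toEquiv.injective.countable

lemma isOpen_compl_lattice : IsOpen (L.lattice : Set ℂ)ᶜ :=
  L.toPeriodPair.isClosed_lattice.isOpen_compl

lemma dense_compl_lattice : Dense (L.lattice : Set ℂ)ᶜ :=
  L.countable_lattice.dense_compl ℝ

lemma isPreconnected_compl_lattice : IsPreconnected (L.lattice : Set ℂ)ᶜ :=
  (L.countable_lattice.isConnected_compl_of_one_lt_rank
    (by rw [Complex.rank_real_complex]; exact Nat.one_lt_ofNat)).isPreconnected

lemma eventually_cofinite_le_norm (R : ℝ) : ∀ᶠ l : L.lattice in cofinite, R ≤ ‖(l : ℂ)‖ := by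
  refine (isCompact_iff_finite.mp (isCompact_closedBall (0 : L.lattice) R)).subset fun l hl => ?_
  simpa using (not_le.1 (show ¬R ≤ ‖(l : ℂ)‖ from hl)).le

lemma summable_const_mul_norm_rpow (c : ℝ) :
    Summable fun l : L.lattice => c * ‖(l : ℂ)‖ ^ (-3 : ℝ) :=
  (ZLattice.summable_norm_rpow L.lattice (-3 : ℝ)
    (by rw [ZLattice.rank ℝ, Complex.finrank_real_complex]; norm_num)).mul_left c

end Lattice

section WeierstrassFactor

/-- The factor `(1 - z/l) exp(z/l + z²/(2l²))` of the Hadamard product of `σ`. Since `z / 0 = 0`,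
the factor at `l = 0` is `1`, so that products may run over the whole lattice. -/
def weierstrassFactor (l z : ℂ) : ℂ := (1 - z / l) * Complex.exp (z / l + z ^ 2 / (2 * l ^ 2))

lemma weierstrassFactor_zero_left (z : ℂ) : weierstrassFactor 0 z = 1 := by
  simp [weierstrassFactor]

lemma weierstrassFactor_zero_right (l : ℂ) : weierstrassFactor l 0 = 1 := by
  simp [weierstrassFactor]

lemma weierstrassFactor_neg_neg (l z : ℂ) :
    weierstrassFactor (-l) (-z) = weierstrassFactor l z := by
  simp [weierstrassFactor]

lemma differentiable_weierstrassFactor (l : ℂ) : Differentiable ℂ (weierstrassFactor l) := by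
  unfold weierstrassFactor
  fun_prop

lemma weierstrassFactor_ne_zero {l z : ℂ} (h : l ≠ 0 → z ≠ l) : weierstrassFactor l z ≠ 0 := by
  rcases eq_or_ne l 0 with rfl | hl
  · simp [weierstrassFactor_zero_left]
  · refine mul_ne_zero (sub_ne_zero.2 fun h1 => h hl ?_) (Complex.exp_ne_zero _)
    exact (div_eq_one_iff_eq hl).1 h1.symm

lemma weierstrassFactor_eq_exp_log_sub_logTaylor {l z : ℂ} (h : z / l ≠ 1) :
    weierstrassFactor l z =
      Complex.exp (Complex.log (1 + -(z / l)) - Complex.logTaylor 3 (-(z / l))) := by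
  have h0 : 1 + -(z / l) ≠ 0 := fun h0 => h (by linear_combination -h0)
  rw [Complex.exp_sub, Complex.exp_log h0, weierstrassFactor, div_eq_mul_inv (1 + -(z / l)),
    ← Complex.exp_neg, ← sub_eq_add_neg]
  have hsq : z ^ 2 / (2 * l ^ 2) = (z / l) ^ 2 / 2 := by rw [div_pow]; ring
  congr 2
  simp only [Complex.logTaylor, Finset.sum_range_succ, Finset.sum_range_zero, hsq]
  push_cast
  ring

lemma norm_weierstrassFactor_sub_one_le {l z : ℂ} {r : ℝ} (hr : 0 < r) (hz : ‖z‖ ≤ r)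
    (hl : 2 * r ≤ ‖l‖) : ‖weierstrassFactor l z - 1‖ ≤ 2 * r ^ 3 * ‖l‖ ^ (-3 : ℝ) := by
  have hl0 : 0 < ‖l‖ := by linarith
  have hu : ‖z / l‖ ≤ r / ‖l‖ := by rw [norm_div]; gcongr
  have hu_half : ‖z / l‖ ≤ 1 / 2 := hu.trans (by rw [div_le_iff₀ hl0]; linarith)
  have hu_ne : z / l ≠ 1 := fun h => by rw [h] at hu_half; norm_num at hu_half
  have hu_inv : (1 - ‖z / l‖)⁻¹ ≤ 2 := by
    rw [inv_le_comm₀ (by linarith) (by norm_num)]; linarith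
  have hlog : ‖Complex.log (1 + -(z / l)) - Complex.logTaylor 3 (-(z / l))‖ ≤ ‖z / l‖ ^ 3 := by
    have h := Complex.norm_log_sub_logTaylor_le 2 (z := -(z / l)) (by rw [norm_neg]; linarith)
    norm_num only [norm_neg] at h
    have := pow_nonneg (norm_nonneg (z / l)) 3
    nlinarith
  have hu_cube : ‖z / l‖ ^ 3 ≤ 1 := pow_le_one₀ (norm_nonneg _) (by linarith)
  rw [weierstrassFactor_eq_exp_log_sub_logTaylor hu_ne]
  calc _ ≤ 2 * ‖z / l‖ ^ 3 :=
        (Complex.norm_exp_sub_one_le (hlog.trans hu_cube)).trans (by linarith)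
    _ ≤ 2 * (r / ‖l‖) ^ 3 := by gcongr
    _ = 2 * r ^ 3 * ‖l‖ ^ (-3 : ℝ) := by
      rw [Real.rpow_neg hl0.le, div_pow, div_eq_mul_inv, mul_assoc]
      norm_cast

lemma logDeriv_weierstrassFactor {l z : ℂ} (hl : l ≠ 0) (hz : z ≠ l) :
    logDeriv (weierstrassFactor l) z = 1 / (z - l) + 1 / l + z / l ^ 2 := by
  have hpoly : HasDerivAt (fun z => z / l + z ^ 2 / (2 * l ^ 2))
      (1 / l + 2 * z / (2 * l ^ 2)) z := by
    simpa using! ((hasDerivAt_id z).div_const l).add ((hasDerivAt_pow 2 z).div_const (2 * l ^ 2))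
  have hlin : HasDerivAt (fun z => 1 - z / l) (-(1 / l)) z := by
    simpa using ((hasDerivAt_id z).div_const l).const_sub 1
  have hexp : logDeriv (fun z => Complex.exp (z / l + z ^ 2 / (2 * l ^ 2))) z =
      1 / l + z / l ^ 2 := by
    rw [logDeriv_apply, hpoly.cexp.deriv, mul_div_cancel_left₀ _ (Complex.exp_ne_zero _)]
    field_simp
  have hne : 1 - z / l ≠ 0 := by
    rw [one_sub_div hl]; exact div_ne_zero (sub_ne_zero.2 hz.symm) hl
  have hzl : z - l ≠ 0 := sub_ne_zero.2 hz
  have hlz : l - z ≠ 0 := sub_ne_zero.2 hz.symm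
  unfold weierstrassFactor
  rw [logDeriv_mul (g := fun z => Complex.exp (z / l + z ^ 2 / (2 * l ^ 2))) z hne
    (Complex.exp_ne_zero _) hlin.differentiableAt hpoly.cexp.differentiableAt, hexp, logDeriv_apply,
    hlin.deriv, one_sub_div hl]
  field_simp
  ring

end WeierstrassFactor

section SigmaProduct

/-- The Hadamard product `σ(z) / z`, indexed by the whole lattice. -/
def sigmaProd (z : ℂ) : ℂ := ∏' l : L.lattice, weierstrassFactor l z

lemma sigma_eq_mul_sigmaProd (z : ℂ) : L.sigma z = z * L.sigmaProd z := by
  unfold sigma sigmaProd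
  congr 1
  rw [← L.toPeriodPair.latticeEquivProd.symm.toEquiv.tprod_eq]
  have hper : ∀ p : ℤ × ℤ,
      (L.toPeriodPair.latticeEquivProd.symm.toEquiv p : ℂ) = L.per p := fun p => by
    simpa only [per, zsmul_eq_mul] using! L.toPeriodPair.latticeEquiv_symm_apply p
  simp only [hper]
  refine tprod_subtype_eq_of_mulSupport_subset (f := fun p => weierstrassFactor (L.per p) z)
    (s := {p | p ≠ 0}) fun p hp h0 => hp ?_
  simp [h0, per, weierstrassFactor_zero_left]

lemma hasProdLocallyUniformlyOn_weierstrassFactor :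
    HasProdLocallyUniformlyOn (fun (l : L.lattice) z => weierstrassFactor l z) L.sigmaProd
      Set.univ := by
  refine hasProdLocallyUniformlyOn_of_forall_compact isOpen_univ fun K _ hK => ?_
  obtain ⟨r, hr, hKr⟩ := hK.isBounded.exists_pos_norm_le
  have hprod := Summable.hasProdUniformlyOn_one_add
    (f := fun (l : L.lattice) z => weierstrassFactor l z - 1) hK
    (L.summable_const_mul_norm_rpow (2 * r ^ 3)) ?_
    fun l => ((differentiable_weierstrassFactor l).sub_const 1).continuous.continuousOn
  · simpa only [add_sub_cancel] using! hprod
  · filter_upwards [L.eventually_cofinite_le_norm (2 * r)] with l hl x hx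
    exact norm_weierstrassFactor_sub_one_le hr (hKr x hx) hl

lemma summable_norm_weierstrassFactor_sub_one (z : ℂ) :
    Summable fun l : L.lattice => ‖weierstrassFactor l z - 1‖ := by
  refine Summable.of_norm_bounded_eventually
    (L.summable_const_mul_norm_rpow (2 * (‖z‖ + 1) ^ 3)) ?_
  filter_upwards [L.eventually_cofinite_le_norm (2 * (‖z‖ + 1))] with l hl
  rw [norm_norm]
  exact norm_weierstrassFactor_sub_one_le (by positivity) (by linarith) hl

lemma differentiable_sigmaProd : Differentiable ℂ L.sigmaProd := by
  rw [← differentiableOn_univ]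
  exact L.hasProdLocallyUniformlyOn_weierstrassFactor.differentiableOn
    (.of_forall fun s => DifferentiableOn.fun_finsetProd fun l _ =>
      (differentiable_weierstrassFactor l).differentiableOn) isOpen_univ

lemma sigmaProd_zero : L.sigmaProd 0 = 1 := by
  simp [sigmaProd, weierstrassFactor_zero_right]

lemma sigmaProd_neg (z : ℂ) : L.sigmaProd (-z) = L.sigmaProd z := by
  unfold sigmaProd
  rw [← (Equiv.neg L.lattice).tprod_eq]
  simp [weierstrassFactor_neg_neg]

lemma sigmaProd_ne_zero {z : ℂ} (hz : z ∉ L.lattice) : L.sigmaProd z ≠ 0 := by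
  have h := tprod_one_add_ne_zero_of_summable
    (f := fun l : L.lattice => weierstrassFactor l z - 1)
    (fun l => by
      simpa using weierstrassFactor_ne_zero fun _ => (ne_of_mem_of_not_mem l.2 hz).symm)
    (L.summable_norm_weierstrassFactor_sub_one z)
  simpa only [add_sub_cancel, sigmaProd] using h

end SigmaProduct

section Sigma

lemma sigma_zero : L.sigma 0 = 0 := by simp [sigma_eq_mul_sigmaProd]

lemma sigma_neg (z : ℂ) : L.sigma (-z) = -L.sigma z := by
  simp [sigma_eq_mul_sigmaProd, sigmaProd_neg]

@[fun_prop]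
lemma differentiable_sigma : Differentiable ℂ L.sigma := by
  rw [funext L.sigma_eq_mul_sigmaProd]
  exact differentiable_id.mul L.differentiable_sigmaProd

@[fun_prop]
lemma continuous_sigma : Continuous L.sigma := L.differentiable_sigma.continuous

lemma differentiable_deriv_sigma : Differentiable ℂ (deriv L.sigma) :=
  differentiableOn_univ.1 (L.differentiable_sigma.differentiableOn.deriv isOpen_univ)

variable {L} in
lemma sigma_ne_zero {z : ℂ} (hz : z ∉ L.lattice) : L.sigma z ≠ 0 := by
  rw [sigma_eq_mul_sigmaProd]
  exact mul_ne_zero (ne_of_mem_of_not_mem (zero_mem _) hz).symm (L.sigmaProd_ne_zero hz)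

lemma deriv_sigma_zero : deriv L.sigma 0 = 1 := by
  rw [funext L.sigma_eq_mul_sigmaProd,
    deriv_fun_mul differentiableAt_fun_id L.differentiable_sigmaProd.differentiableAt]
  simp [sigmaProd_zero]

lemma deriv_sigma_neg (z : ℂ) : deriv L.sigma (-z) = deriv L.sigma z := by
  have h := deriv_comp_neg L.sigma z
  simp only [sigma_neg, deriv.fun_neg] at h
  exact (neg_injective h).symm

end Sigma

section ZetaDerivative

/-- The partial products of `σ`, used to identify `-ζ'` with the lattice sum `℘`. -/
def sigmaPartialProd (s : Finset L.lattice) (z : ℂ) : ℂ := z * ∏ l ∈ s, weierstrassFactor l z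

lemma differentiable_sigmaPartialProd (s : Finset L.lattice) :
    Differentiable ℂ (L.sigmaPartialProd s) :=
  differentiable_id.mul
    (Differentiable.fun_finsetProd fun l _ => differentiable_weierstrassFactor (l : ℂ))

lemma tendstoLocallyUniformlyOn_sigmaPartialProd :
    TendstoLocallyUniformlyOn L.sigmaPartialProd L.sigma atTop Set.univ := by
  rw [funext L.sigma_eq_mul_sigmaProd]
  have hid : TendstoLocallyUniformlyOn (fun (_ : Finset L.lattice) (z : ℂ) => z) (fun z => z)
      atTop Set.univ := fun u hu x _ =>
    ⟨Set.univ, univ_mem, .of_forall fun _ _ _ => refl_mem_uniformity hu⟩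
  exact hid.mul₀ L.hasProdLocallyUniformlyOn_weierstrassFactor continuousOn_id
    L.differentiable_sigmaProd.continuous.continuousOn

lemma tendstoLocallyUniformlyOn_logDeriv_sigmaPartialProd :
    TendstoLocallyUniformlyOn (fun s => logDeriv (L.sigmaPartialProd s)) L.zeta atTop
      (L.lattice : Set ℂ)ᶜ := by
  have hσ := L.tendstoLocallyUniformlyOn_sigmaPartialProd
  have hσ' := hσ.deriv
    (.of_forall fun s => (L.differentiable_sigmaPartialProd s).differentiableOn) isOpen_univ
  exact (hσ'.mono (Set.subset_univ _)).div₀ (hσ.mono (Set.subset_univ _))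
    L.differentiable_deriv_sigma.continuous.continuousOn L.continuous_sigma.continuousOn
    fun z hz => sigma_ne_zero hz

variable {L}

-- At `l = 0` the summand on the right is `1 / z`, the logarithmic derivative of the factor `z`.
lemma logDeriv_sigmaPartialProd {s : Finset L.lattice} (hs : 0 ∈ s) {z : ℂ} (hz : z ∉ L.lattice) :
    logDeriv (L.sigmaPartialProd s) z = ∑ l ∈ s, (1 / (z - l) + 1 / l + z / (l : ℂ) ^ 2) := by
  have hne : ∀ l : L.lattice, z ≠ l := fun l => (ne_of_mem_of_not_mem l.2 hz).symm
  have hfactor : ∀ l ∈ s, weierstrassFactor l z ≠ 0 := fun l _ =>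
    weierstrassFactor_ne_zero fun _ => hne l
  have hdiff : ∀ l ∈ s, DifferentiableAt ℂ (weierstrassFactor l) z := fun l _ =>
    differentiable_weierstrassFactor _ z
  have hzero : logDeriv (weierstrassFactor 0) z = 0 := by
    rw [funext weierstrassFactor_zero_left, logDeriv_const, Pi.zero_apply]
  unfold sigmaPartialProd
  rw [logDeriv_mul (f := fun z => z) z (hne 0) (Finset.prod_ne_zero_iff.2 hfactor)
    differentiableAt_fun_id (DifferentiableAt.fun_finsetProd hdiff),
    logDeriv_prod hfactor hdiff, ← Finset.add_sum_erase s _ hs,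
    ← Finset.add_sum_erase s (fun l => 1 / (z - l) + 1 / l + z / (l : ℂ) ^ 2) hs]
  rw [Finset.sum_congr rfl fun l hl => logDeriv_weierstrassFactor
    (Subtype.coe_injective.ne (Finset.ne_of_mem_erase hl)) (hne l)]
  simp [hzero]

lemma hasDerivAt_zetaSummand {l z : ℂ} (hz : z ≠ l) :
    HasDerivAt (fun z => 1 / (z - l) + 1 / l + z / l ^ 2) (-(1 / (z - l) ^ 2 - 1 / l ^ 2)) z := by
  have h := ((((hasDerivAt_id z).sub_const l).inv (sub_ne_zero.2 hz)).add_const (1 / l)).add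
    ((hasDerivAt_id z).div_const (l ^ 2))
  convert! h using 1
  · ext; simp
  · simp only [id_eq]; ring

lemma hasDerivAt_zeta {z : ℂ} (hz : z ∉ L.lattice) :
    HasDerivAt L.zeta (-L.toPeriodPair.weierstrassP z) z := by
  have hdiff : DifferentiableAt ℂ L.zeta z :=
    (L.differentiable_deriv_sigma z).div (L.differentiable_sigma z) (sigma_ne_zero hz)
  have hderiv : ∀ s : Finset L.lattice, 0 ∈ s → deriv (logDeriv (L.sigmaPartialProd s)) z =
      ∑ l ∈ s, -(1 / (z - l) ^ 2 - 1 / (l : ℂ) ^ 2) := fun s hs => by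
    refine (HasDerivAt.congr_of_eventuallyEq (HasDerivAt.fun_sum fun l _ =>
      hasDerivAt_zetaSummand (ne_of_mem_of_not_mem l.2 hz).symm) ?_).deriv
    filter_upwards [L.isOpen_compl_lattice.mem_nhds hz] with x hx
    exact logDeriv_sigmaPartialProd hs hx
  have hlim : Tendsto (fun s => deriv (logDeriv (L.sigmaPartialProd s)) z) atTop
      (𝓝 (deriv L.zeta z)) := by
    refine (L.tendstoLocallyUniformlyOn_logDeriv_sigmaPartialProd.deriv ?_
      L.isOpen_compl_lattice).tendsto_at hz
    filter_upwards [eventually_ge_atTop {0}] with s hs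
    intro x hx
    refine (DifferentiableOn.fun_sum fun l _ y hy => (hasDerivAt_zetaSummand
      (ne_of_mem_of_not_mem l.2 hy).symm).differentiableAt.differentiableWithinAt).congr
      (fun y hy => logDeriv_sigmaPartialProd (hs (Finset.mem_singleton_self 0)) hy) x hx
  have hsum : Tendsto (fun s : Finset L.lattice => ∑ l ∈ s, -(1 / (z - l) ^ 2 - 1 / (l : ℂ) ^ 2))
      atTop (𝓝 (-L.toPeriodPair.weierstrassP z)) := (L.toPeriodPair.hasSum_weierstrassP z).neg
  rw [← tendsto_nhds_unique hlim (hsum.congr' ?_)]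
  · exact hdiff.hasDerivAt
  · filter_upwards [eventually_ge_atTop {0}] with s hs
    exact (hderiv s (hs (Finset.mem_singleton_self 0))).symm

end ZetaDerivative

section QuasiPeriodicity

variable {L} {w : ℂ}

lemma exists_zeta_add_eq (hw : w ∈ L.lattice) :
    ∃ η, ∀ z ∉ L.lattice, L.zeta (z + w) = L.zeta z + η := by
  have hderiv : ∀ z ∈ (L.lattice : Set ℂ)ᶜ,
      HasDerivAt (fun z => L.zeta (z + w) - L.zeta z) 0 z := fun z hz => by
    have hzw : z + w ∉ L.lattice := fun h => hz ((Submodule.add_mem_iff_left _ hw).1 h)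
    have hd := ((hasDerivAt_zeta hzw).comp_add_const z w).sub (hasDerivAt_zeta hz)
    rwa [show L.toPeriodPair.weierstrassP (z + w) = L.toPeriodPair.weierstrassP z from
      L.toPeriodPair.weierstrassP_add_coe z ⟨w, hw⟩, sub_self] at hd
  obtain ⟨z₀, hz₀⟩ := L.dense_compl_lattice.nonempty
  refine ⟨L.zeta (z₀ + w) - L.zeta z₀, fun z hz => ?_⟩
  linear_combination L.isOpen_compl_lattice.is_const_of_deriv_eq_zero L.isPreconnected_compl_lattice
    (fun x hx => (hderiv x hx).differentiableAt.differentiableWithinAt)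
    (fun x hx => (hderiv x hx).deriv) hz hz₀

lemma hasDerivAt_sigma_add_div_sigma_mul_exp {η : ℂ} (hw : w ∈ L.lattice)
    (hη : ∀ z ∉ L.lattice, L.zeta (z + w) = L.zeta z + η) {z : ℂ} (hz : z ∉ L.lattice) :
    HasDerivAt (fun z => L.sigma (z + w) / L.sigma z * Complex.exp (-(η * z))) 0 z := by
  have hzw : z + w ∉ L.lattice := fun h => hz ((Submodule.add_mem_iff_left _ hw).1 h)
  have hσz := sigma_ne_zero hz
  have hσzw := sigma_ne_zero hzw
  have hratio := ((L.differentiable_sigma (z + w)).hasDerivAt.comp_add_const z w).div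
    (L.differentiable_sigma z).hasDerivAt hσz
  have hexp : HasDerivAt (fun z => Complex.exp (-(η * z))) (Complex.exp (-(η * z)) * -η) z := by
    simpa using ((hasDerivAt_id z).const_mul η).fun_neg.cexp
  convert! hratio.mul hexp using 1
  have hσ' : deriv L.sigma (z + w) = (deriv L.sigma z / L.sigma z + η) * L.sigma (z + w) :=
    (div_eq_iff hσzw).1 (hη z hz)
  rw [Pi.div_apply, hσ']
  field_simp
  ring

lemma exists_sigma_add_eq (hw : w ∈ L.lattice) :
    ∃ c η : ℂ, c ≠ 0 ∧ ∀ z, L.sigma (z + w) = c * Complex.exp (η * z) * L.sigma z := by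
  obtain ⟨η, hη⟩ := exists_zeta_add_eq hw
  obtain ⟨z₀, hz₀⟩ := L.dense_compl_lattice.nonempty
  have hderiv := fun z => hasDerivAt_sigma_add_div_sigma_mul_exp hw hη (z := z)
  have hz₀w : z₀ + w ∉ L.lattice := fun h => hz₀ ((Submodule.add_mem_iff_left _ hw).1 h)
  refine ⟨L.sigma (z₀ + w) / L.sigma z₀ * Complex.exp (-(η * z₀)), η,
    mul_ne_zero (div_ne_zero (sigma_ne_zero hz₀w) (sigma_ne_zero hz₀)) (Complex.exp_ne_zero _), ?_⟩
  refine congrFun (Continuous.ext_on L.dense_compl_lattice (by fun_prop) (by fun_prop) ?_)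
  intro z hz
  have hconst := L.isOpen_compl_lattice.is_const_of_deriv_eq_zero L.isPreconnected_compl_lattice
    (fun x hx => (hderiv x hx).differentiableAt.differentiableWithinAt)
    (fun x hx => (hderiv x hx).deriv) hz hz₀
  have hσ := sigma_ne_zero hz
  simp only at hconst ⊢
  rw [← hconst, Complex.exp_neg]
  have := Complex.exp_ne_zero (η * z)
  field_simp

lemma sigma_eq_zero_iff {z : ℂ} : L.sigma z = 0 ↔ z ∈ L.lattice := by
  refine ⟨fun h => by_contra fun hz => sigma_ne_zero hz h, fun hz => ?_⟩
  obtain ⟨c, η, -, h⟩ := exists_sigma_add_eq hz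
  simpa [sigma_zero] using h 0

lemma deriv_sigma_ne_zero (hw : w ∈ L.lattice) : deriv L.sigma w ≠ 0 := by
  obtain ⟨c, η, hc, h⟩ := exists_sigma_add_eq hw
  have hderiv := congrArg (fun f => deriv f 0) (funext h)
  rw [deriv_comp_add_const, deriv_fun_mul (by fun_prop) (by fun_prop)] at hderiv
  simpa [sigma_zero, deriv_sigma_zero] using ne_of_eq_of_ne hderiv (by
    simpa [sigma_zero, deriv_sigma_zero] using hc)

end QuasiPeriodicity

section ThreeTermIdentity

lemma exists_eq_const_mul_of_quasiPeriodic {F D : ℂ → ℂ} (hF : Differentiable ℂ F)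
    (hD : Differentiable ℂ D) (hzero : ∀ z, D z = 0 → F z = 0 ∧ deriv D z ≠ 0)
    (hquasi : ∀ w ∈ L.lattice, ∃ m : ℂ → ℂ, (∀ z, m z ≠ 0) ∧
      (∀ z, F (z + w) = m z * F z) ∧ ∀ z, D (z + w) = m z * D z) :
    ∃ k, ∀ z, F z = k * D z := by
  obtain ⟨Q, hQ, hFQ⟩ := exists_differentiable_eq_mul hF hD hzero
  have hperiodic : ∀ z, ∀ w ∈ L.lattice, Q (z + w) = Q z := fun z w hw => by
    obtain ⟨m, hm, hFm, hDm⟩ := hquasi w hw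
    refine congrFun (Continuous.ext_on (f := fun z => Q (z + w))
      (dense_ne_zero_of_deriv_ne_zero fun z hz => (hzero z hz).2)
      (hQ.continuous.comp (continuous_add_const w)) hQ.continuous fun x hx => ?_) z
    refine mul_right_cancel₀ (mul_ne_zero (hm x) hx) ?_
    linear_combination hFm x - hFQ (x + w) + m x * hFQ x - Q (x + w) * hDm x
  have hconst := hQ.apply_eq_apply_of_bounded
    (IsZLattice.isCompact_range_of_periodic L.lattice _ hQ.continuous hperiodic).isBounded
  exact ⟨Q 0, fun z => by rw [hFQ, hconst z 0]⟩

variable {L} in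
lemma exists_sigma_add_mul_sigma_sub_eq {w : ℂ} (hw : w ∈ L.lattice) :
    ∃ m : ℂ → ℂ, (∀ x, m x ≠ 0) ∧ ∀ x a, L.sigma (x + w + a) * L.sigma (x + w - a) =
      m x * (L.sigma (x + a) * L.sigma (x - a)) := by
  obtain ⟨c, η, hc, h⟩ := exists_sigma_add_eq hw
  refine ⟨fun x => c ^ 2 * Complex.exp (2 * η * x), fun x =>
    mul_ne_zero (pow_ne_zero 2 hc) (Complex.exp_ne_zero _), fun x a => ?_⟩
  have hexp : Complex.exp (2 * η * x) =
      Complex.exp (η * (x + a)) * Complex.exp (η * (x - a)) := by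
    rw [← Complex.exp_add]; ring_nf
  simp only [add_right_comm x w a, add_sub_right_comm x w a, h, hexp]
  ring

lemma deriv_sigma_add_mul_sigma_sub (a x : ℂ) :
    deriv (fun x => L.sigma (x + a) * L.sigma (x - a)) x =
      deriv L.sigma (x + a) * L.sigma (x - a) + L.sigma (x + a) * deriv L.sigma (x - a) := by
  rw [deriv_fun_mul (by fun_prop) (by fun_prop), deriv_comp_add_const, deriv_comp_sub_const]

variable {L} in
lemma deriv_sigma_add_mul_sigma_sub_ne_zero {c x : ℂ} (hc : 2 * c ∉ L.lattice)
    (hx : L.sigma (x + c) * L.sigma (x - c) = 0) :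
    deriv (fun x => L.sigma (x + c) * L.sigma (x - c)) x ≠ 0 := by
  have hdiff : x + c - (x - c) = 2 * c := by ring
  rw [deriv_sigma_add_mul_sigma_sub]
  rcases mul_eq_zero.1 hx with h | h
  · have hmem := sigma_eq_zero_iff.1 h
    rw [h, zero_mul, add_zero]
    exact mul_ne_zero (deriv_sigma_ne_zero hmem)
      (sigma_ne_zero fun h' => hc (hdiff ▸ sub_mem hmem h'))
  · have hmem := sigma_eq_zero_iff.1 h
    rw [h, mul_zero, zero_add]
    exact mul_ne_zero (sigma_ne_zero fun h' => hc (hdiff ▸ sub_mem h' hmem))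
      (deriv_sigma_ne_zero hmem)

-- Both sides are quasi-periodic in `x` with the same multipliers and share the zeros `± c`.
variable {L} in
lemma sigma_three_term_of_notMem {a c : ℂ} (b x : ℂ) (hc : 2 * c ∉ L.lattice)
    (hac : a + c ∉ L.lattice) (hac' : a - c ∉ L.lattice) :
    L.sigma (x + a) * L.sigma (x - a) * (L.sigma (b + c) * L.sigma (b - c)) +
      L.sigma (x + b) * L.sigma (x - b) * (L.sigma (c + a) * L.sigma (c - a)) =
    -(L.sigma (a + b) * L.sigma (a - b)) * (L.sigma (x + c) * L.sigma (x - c)) := by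
  set F : ℂ → ℂ := fun x =>
    L.sigma (x + a) * L.sigma (x - a) * (L.sigma (b + c) * L.sigma (b - c)) +
      L.sigma (x + b) * L.sigma (x - b) * (L.sigma (c + a) * L.sigma (c - a)) with hF
  set D : ℂ → ℂ := fun x => L.sigma (x + c) * L.sigma (x - c)
  have hodd : ∀ u v, L.sigma (u - v) = -L.sigma (v - u) := fun u v => by rw [← sigma_neg, neg_sub]
  have hquasi : ∀ w ∈ L.lattice, ∃ m : ℂ → ℂ, (∀ z, m z ≠ 0) ∧
      (∀ z, F (z + w) = m z * F z) ∧ ∀ z, D (z + w) = m z * D z := fun w hw => by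
    obtain ⟨m, hm, h⟩ := exists_sigma_add_mul_sigma_sub_eq hw
    exact ⟨m, hm, fun z => by simp only [hF, h]; ring, fun z => h z c⟩
  have hF_add_mem : ∀ {z w}, w ∈ L.lattice → F z = 0 → F (z + w) = 0 := fun {z w} hw hz => by
    obtain ⟨m, -, h, -⟩ := hquasi w hw
    rw [h, hz, mul_zero]
  have hFc : F c = 0 := by simp only [hF, hodd b c, add_comm b c]; ring
  have hFc' : F (-c) = 0 := by
    rw [← hFc]
    simp only [hF, neg_add_eq_sub, ← neg_add', sigma_neg, hodd a c, hodd b c]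
    ring
  have hzero : ∀ z, D z = 0 → F z = 0 ∧ deriv D z ≠ 0 := fun z hz => by
    refine ⟨?_, deriv_sigma_add_mul_sigma_sub_ne_zero hc hz⟩
    rcases mul_eq_zero.1 hz with h | h
    · simpa using hF_add_mem (sigma_eq_zero_iff.1 h) hFc'
    · simpa using hF_add_mem (sigma_eq_zero_iff.1 h) hFc
  obtain ⟨k, hk⟩ := L.exists_eq_const_mul_of_quasiPeriodic (by fun_prop) (by fun_prop) hzero hquasi
  have hk_eq : k = -(L.sigma (a + b) * L.sigma (a - b)) := by
    refine mul_right_cancel₀ (mul_ne_zero (sigma_ne_zero hac) (sigma_ne_zero hac')) ?_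
    rw [← hk a]
    simp only [hF, sub_self, sigma_zero, hodd c a, add_comm c a]
    ring
  rw [← hk_eq]
  exact hk x

theorem sigma_three_term (a b c x : ℂ) :
    L.sigma (x + a) * L.sigma (x - a) * (L.sigma (b + c) * L.sigma (b - c)) +
      L.sigma (x + b) * L.sigma (x - b) * (L.sigma (c + a) * L.sigma (c - a)) =
    -(L.sigma (a + b) * L.sigma (a - b)) * (L.sigma (x + c) * L.sigma (x - c)) := by
  have hcountable : ((2 * ·) ⁻¹' (L.lattice : Set ℂ) ∪ (a + ·) ⁻¹' (L.lattice : Set ℂ) ∪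
      (a - ·) ⁻¹' (L.lattice : Set ℂ)).Countable :=
    ((L.countable_lattice.preimage (mul_right_injective₀ two_ne_zero)).union
      (L.countable_lattice.preimage (add_right_injective a))).union
      (L.countable_lattice.preimage sub_right_injective)
  induction c using (hcountable.dense_compl ℝ).induction with
  | isClosed => exact isClosed_eq (by fun_prop) (by fun_prop)
  | mem c hc =>
    simp only [Set.compl_union] at hc
    exact sigma_three_term_of_notMem b x hc.1.1 hc.1.2 hc.2

end ThreeTermIdentity

section AdditionFormulas

lemma sigma_fay (x y k k' : ℂ) :
    L.sigma (x + y) * L.sigma (y + k') * L.sigma k * L.sigma (x + k + k') +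
      L.sigma (x + y + k + k') * L.sigma (y - k) * L.sigma x * L.sigma k' =
    L.sigma (x + y + k') * L.sigma y * L.sigma (x + k) * L.sigma (k + k') := by
  have h := L.sigma_three_term ((x - k') / 2) ((x + 2 * k + k') / 2) ((x + k') / 2)
    ((x + 2 * y + k') / 2)
  rw [show (x - k') / 2 - (x + 2 * k + k') / 2 = -(k + k') by ring, sigma_neg] at h
  linear_combination (norm := ring_nf) h

lemma deriv_sigma_three_term (a b c : ℂ) :
    (deriv L.sigma (c + a) * L.sigma (c - a) + L.sigma (c + a) * deriv L.sigma (c - a)) *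
        (L.sigma (b + c) * L.sigma (b - c)) +
      (deriv L.sigma (c + b) * L.sigma (c - b) + L.sigma (c + b) * deriv L.sigma (c - b)) *
        (L.sigma (c + a) * L.sigma (c - a)) =
    -(L.sigma (a + b) * L.sigma (a - b)) * L.sigma (c + c) := by
  have h := congrArg (deriv · c) (funext (L.sigma_three_term a b c))
  beta_reduce at h
  rw [deriv_fun_add (by fun_prop) (by fun_prop)] at h
  simpa only [deriv_mul_const_field, deriv_const_mul_field, deriv_sigma_add_mul_sigma_sub,
    sub_self, sigma_zero, deriv_sigma_zero, mul_zero, zero_add, mul_one] using h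

variable {L} in
lemma chi_eq_div {α β ξ : ℂ} (hα : L.sigma α ≠ 0) (hβ : L.sigma β ≠ 0) (hξ : L.sigma ξ ≠ 0)
    (hξαβ : L.sigma (ξ + α + β) ≠ 0) :
    L.chi α β ξ = L.sigma (α + β) * L.sigma (β + ξ) * L.sigma (ξ + α) /
      (L.sigma α * L.sigma β * L.sigma ξ * L.sigma (ξ + α + β)) := by
  have h := L.deriv_sigma_three_term ((α - β) / 2) ((α + β) / 2 + ξ) ((α + β) / 2)
  rw [show (α + β) / 2 + (α - β) / 2 = α by ring, show (α + β) / 2 - (α - β) / 2 = β by ring,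
    show (α + β) / 2 + ξ + (α + β) / 2 = ξ + α + β by ring, add_sub_cancel_left,
    show (α + β) / 2 + ((α + β) / 2 + ξ) = ξ + α + β by ring,
    show (α + β) / 2 - ((α + β) / 2 + ξ) = -ξ by ring,
    show (α - β) / 2 + ((α + β) / 2 + ξ) = ξ + α by ring,
    show (α - β) / 2 - ((α + β) / 2 + ξ) = -(β + ξ) by ring, add_halves,
    sigma_neg, sigma_neg, deriv_sigma_neg] at h
  simp only [chi, zeta]
  field_simp
  linear_combination h

lemma exp_zeta_mul_Psi (ξ κ : ℂ) :
    Complex.exp (L.zeta ξ * κ) * L.Psi ξ κ = L.Phi ξ κ := by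
  rw [Psi, mul_left_comm, ← Complex.exp_add, neg_mul, add_neg_cancel, Complex.exp_zero, mul_one]

lemma exp_neg_zeta_mul_Psi_neg (ξ κ : ℂ) :
    Complex.exp (-(L.zeta ξ) * κ) * L.Psi ξ (-κ) = L.Phi ξ (-κ) := by
  rw [neg_mul_comm, exp_zeta_mul_Psi]

lemma Phi_neg_left (ξ κ : ℂ) : L.Phi (-ξ) κ = -L.Phi ξ (-κ) := by
  simp only [Phi, sigma_neg, neg_add_eq_sub, ← sub_eq_add_neg, ← neg_sub ξ κ, neg_mul, mul_neg,
    neg_div]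

variable {L}

lemma Phi_ne_zero {ξ κ : ℂ} (hξ : L.sigma ξ ≠ 0) (hκ : L.sigma κ ≠ 0)
    (hξκ : L.sigma (ξ + κ) ≠ 0) : L.Phi ξ κ ≠ 0 :=
  div_ne_zero hξκ (mul_ne_zero hξ hκ)

lemma Phi_fay {x y k k' : ℂ} (hx : L.sigma x ≠ 0) (hy : L.sigma y ≠ 0) (hk : L.sigma k ≠ 0)
    (hk' : L.sigma k' ≠ 0) (hxy : L.sigma (x + y) ≠ 0) (hkk' : L.sigma (k + k') ≠ 0) :
    L.Phi x (k + k') * L.Phi y k' =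
      L.Phi x k * L.Phi (x + y) k' + L.Phi (x + y) (k + k') * L.Phi y (-k) := by
  simp only [Phi, sigma_neg, ← sub_eq_add_neg, ← add_assoc]
  field_simp
  linear_combination L.sigma_fay x y k k'

lemma Phi_mul_Phi_eq_Phi_add_mul_chi {x y k : ℂ} (hx : L.sigma x ≠ 0) (hy : L.sigma y ≠ 0)
    (hk : L.sigma k ≠ 0) (hxy : L.sigma (x + y) ≠ 0) (hxyk : L.sigma (x + y + k) ≠ 0) :
    L.Phi x k * L.Phi y k = L.Phi (x + y) k * L.chi y k x := by
  rw [chi_eq_div hy hk hx hxyk, add_comm k x]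
  simp only [Phi]
  field_simp

end AdditionFormulas

end EllLattice

namespace KPData

variable {N N' : ℕ} (D : KPData N N')

/-- The plane-wave factor `ρ_i` without its exponential `e^{ζ(ξ)κ_i}`, so that `r`, `s` and `M`
can be written with `Φ` in place of `Ψ`. -/
def wave (i : Fin N) (n m h : ℤ) : ℂ :=
  D.L.Phi D.del (-(D.κ i)) ^ n * D.L.Phi D.eps (-(D.κ i)) ^ m *
    D.L.Phi D.lam (-(D.κ i)) ^ h * D.ρ0 i

/-- The plane-wave factor `ν_j` without its exponential `e^{ζ(ξ)κ'_j}`. -/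
def dualWave (j : Fin N') (n m h : ℤ) : ℂ :=
  D.L.Phi D.del (D.κ' j) ^ (-n) * D.L.Phi D.eps (D.κ' j) ^ (-m) *
    D.L.Phi D.lam (D.κ' j) ^ (-h) * D.ν0 j

lemma ρ_eq_wave_mul_exp (i : Fin N) (n m h : ℤ) :
    D.ρ i n m h = D.wave i n m h * Complex.exp (D.L.zeta (D.xi n m h) * D.κ i) := by
  simp only [ρ, wave, EllLattice.exp_neg_zeta_mul_Psi_neg]
  ring

lemma ν_eq_dualWave_mul_exp (j : Fin N') (n m h : ℤ) :
    D.ν j n m h = D.dualWave j n m h * Complex.exp (D.L.zeta (D.xi n m h) * D.κ' j) := by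
  simp only [ν, dualWave, EllLattice.exp_zeta_mul_Psi]
  ring

lemma r_apply (i : Fin N) (n m h : ℤ) :
    D.r n m h i = D.wave i n m h * D.L.Phi (D.xi n m h) (D.κ i) := by
  rw [r, ρ_eq_wave_mul_exp, mul_assoc, EllLattice.exp_zeta_mul_Psi]

lemma s_apply (j : Fin N') (n m h : ℤ) :
    D.s n m h j = D.dualWave j n m h * D.L.Phi (D.xi n m h) (D.κ' j) := by
  rw [s, ν_eq_dualWave_mul_exp, mul_assoc, EllLattice.exp_zeta_mul_Psi]

lemma M_apply (i : Fin N) (j : Fin N') (n m h : ℤ) :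
    D.M n m h i j =
      D.wave i n m h * D.L.Phi (D.xi n m h) (D.κ i + D.κ' j) * D.dualWave j n m h := by
  rw [M, of_apply, ρ_eq_wave_mul_exp, ν_eq_dualWave_mul_exp, ← EllLattice.exp_zeta_mul_Psi,
    mul_add, Complex.exp_add]
  ring

variable {D} {P : ℕ} {extra : Fin P → ℂ}

namespace Generic

lemma sigma_ne_zero (hgen : D.Generic extra) (c0 cn cm ch : ℤ) (a : Fin N → ℤ) (b : Fin N' → ℤ)
    (hne : ¬(c0 = 0 ∧ cn = 0 ∧ cm = 0 ∧ ch = 0 ∧ a = 0 ∧ b = 0)) :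
    D.L.sigma (c0 • D.xi0 + cn • D.del + cm • D.eps + ch • D.lam +
      (∑ i, a i • D.κ i) + ∑ j, b j • D.κ' j) ≠ 0 := by
  refine EllLattice.sigma_ne_zero fun hmem => hgen c0 cn cm ch a b 0 (by tauto) ?_
  simpa [EllLattice.mem_iff_mem_lattice] using hmem

lemma sigma_xi_ne_zero (hgen : D.Generic extra) (n m h : ℤ) : D.L.sigma (D.xi n m h) ≠ 0 := by
  simpa [xi] using hgen.sigma_ne_zero 1 n m h 0 0 (by simp)

lemma sigma_κ_ne_zero (hgen : D.Generic extra) (i : Fin N) : D.L.sigma (D.κ i) ≠ 0 := by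
  simpa [Pi.single_apply] using hgen.sigma_ne_zero 0 0 0 0 (Pi.single i 1) 0 (by simp)

lemma sigma_κ'_ne_zero (hgen : D.Generic extra) (j : Fin N') : D.L.sigma (D.κ' j) ≠ 0 := by
  simpa [Pi.single_apply] using hgen.sigma_ne_zero 0 0 0 0 0 (Pi.single j 1) (by simp)

lemma sigma_κ_add_κ'_ne_zero (hgen : D.Generic extra) (i : Fin N) (j : Fin N') :
    D.L.sigma (D.κ i + D.κ' j) ≠ 0 := by
  simpa [Pi.single_apply] using
    hgen.sigma_ne_zero 0 0 0 0 (Pi.single i 1) (Pi.single j 1) (by simp)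

lemma sigma_xi_add_κ_ne_zero (hgen : D.Generic extra) (i : Fin N) (n m h : ℤ) :
    D.L.sigma (D.xi n m h + D.κ i) ≠ 0 := by
  simpa [xi, Pi.single_apply] using hgen.sigma_ne_zero 1 n m h (Pi.single i 1) 0 (by simp)

lemma sigma_xi_add_κ'_ne_zero (hgen : D.Generic extra) (j : Fin N') (n m h : ℤ) :
    D.L.sigma (D.xi n m h + D.κ' j) ≠ 0 := by
  simpa [xi, Pi.single_apply] using hgen.sigma_ne_zero 1 n m h 0 (Pi.single j 1) (by simp)

lemma sigma_ne_zero_and_Phi_ne_zero (hgen : D.Generic extra) {y : ℂ} (cn cm ch : ℤ)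
    (hc : ¬(cn = 0 ∧ cm = 0 ∧ ch = 0)) (hy : y = cn • D.del + cm • D.eps + ch • D.lam) :
    D.L.sigma y ≠ 0 ∧ (∀ i, D.L.Phi y (-(D.κ i)) ≠ 0) ∧ ∀ j, D.L.Phi y (D.κ' j) ≠ 0 := by
  have hσy : D.L.sigma y ≠ 0 := by
    simpa [hy] using hgen.sigma_ne_zero 0 cn cm ch 0 0 (by tauto)
  refine ⟨hσy, fun i => EllLattice.Phi_ne_zero hσy ?_ ?_, fun j =>
    EllLattice.Phi_ne_zero hσy (hgen.sigma_κ'_ne_zero j) ?_⟩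
  · simpa [EllLattice.sigma_neg] using hgen.sigma_κ_ne_zero i
  · simpa [hy, Pi.single_apply] using
      hgen.sigma_ne_zero 0 cn cm ch (Pi.single i (-1)) 0 (by tauto)
  · simpa [hy, Pi.single_apply] using
      hgen.sigma_ne_zero 0 cn cm ch 0 (Pi.single j 1) (by tauto)

end Generic

/-- Moving from `(n, m, h)` to `(n', m', h')` shifts `ξ` by `y` and multiplies the plane waves by
`Φ_y(-κ_i)` and `1 / Φ_y(κ'_j)`. The three lattice directions are the instances `y = δ, ε, λ`. -/
structure IsStep (D : KPData N N') (y : ℂ) (n m h n' m' h' : ℤ) : Prop where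
  sigma_ne_zero : D.L.sigma y ≠ 0
  xi_eq : D.xi n' m' h' = D.xi n m h + y
  wave_eq : ∀ i, D.wave i n' m' h' = D.wave i n m h * D.L.Phi y (-(D.κ i))
  dualWave_eq : ∀ j, D.dualWave j n m h = D.dualWave j n' m' h' * D.L.Phi y (D.κ' j)

lemma Generic.isStep_del (hgen : D.Generic extra) (n m h : ℤ) :
    D.IsStep D.del n m h (n + 1) m h := by
  obtain ⟨hσ, hκ, hκ'⟩ :=
    hgen.sigma_ne_zero_and_Phi_ne_zero (y := D.del) 1 0 0 (by simp) (by simp)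
  refine ⟨hσ, by simp only [xi, add_zsmul, one_zsmul]; ring, fun i => ?_, fun j => ?_⟩
  · simp only [wave, zpow_add_one₀ (hκ i)]
    ring
  · simp only [dualWave, neg_add, ← sub_eq_add_neg, zpow_sub_one₀ (hκ' j)]
    field_simp [hκ' j]

lemma Generic.isStep_eps (hgen : D.Generic extra) (n m h : ℤ) :
    D.IsStep D.eps n m h n (m + 1) h := by
  obtain ⟨hσ, hκ, hκ'⟩ :=
    hgen.sigma_ne_zero_and_Phi_ne_zero (y := D.eps) 0 1 0 (by simp) (by simp)
  refine ⟨hσ, by simp only [xi, add_zsmul, one_zsmul]; ring, fun i => ?_, fun j => ?_⟩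
  · simp only [wave, zpow_add_one₀ (hκ i)]
    ring
  · simp only [dualWave, neg_add, ← sub_eq_add_neg, zpow_sub_one₀ (hκ' j)]
    field_simp [hκ' j]

lemma Generic.isStep_lam (hgen : D.Generic extra) (n m h : ℤ) :
    D.IsStep D.lam n m h n m (h + 1) := by
  obtain ⟨hσ, hκ, hκ'⟩ :=
    hgen.sigma_ne_zero_and_Phi_ne_zero (y := D.lam) 0 0 1 (by simp) (by simp)
  refine ⟨hσ, by simp only [xi, add_zsmul, one_zsmul]; ring, fun i => ?_, fun j => ?_⟩
  · simp only [wave, zpow_add_one₀ (hκ i)]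
    ring
  · simp only [dualWave, neg_add, ← sub_eq_add_neg, zpow_sub_one₀ (hκ' j)]
    field_simp [hκ' j]

namespace IsStep

variable {y : ℂ} {n m h n' m' h' : ℤ}

lemma M_eq_sub_vecMulVec (hstep : D.IsStep y n m h n' m' h') (hgen : D.Generic extra) :
    D.M n' m' h' = D.M n m h - vecMulVec (D.r n m h) (D.s n' m' h') := by
  ext i j
  have hfay := EllLattice.Phi_fay (hgen.sigma_xi_ne_zero n m h) hstep.sigma_ne_zero
    (hgen.sigma_κ_ne_zero i) (hgen.sigma_κ'_ne_zero j)
    (hstep.xi_eq ▸ hgen.sigma_xi_ne_zero n' m' h') (hgen.sigma_κ_add_κ'_ne_zero i j)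
  rw [Matrix.sub_apply, vecMulVec_apply, M_apply, M_apply, r_apply, s_apply, hstep.wave_eq,
    hstep.dualWave_eq, hstep.xi_eq]
  linear_combination -(D.wave i n m h * D.dualWave j n' m' h') * hfay

lemma DK_neg_mulVec_r (hstep : D.IsStep y n m h n' m' h') (hgen : D.Generic extra) :
    D.DK (-y) n' m' h' *ᵥ (-D.r n m h) = D.r n' m' h' := by
  ext i
  have hxi : D.xi n m h = D.xi n' m' h' + -y := by rw [hstep.xi_eq, add_neg_cancel_right]
  have hchi := EllLattice.Phi_mul_Phi_eq_Phi_add_mul_chi (y := -y)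
    (hgen.sigma_xi_ne_zero n' m' h') (by simpa [EllLattice.sigma_neg] using hstep.sigma_ne_zero)
    (hgen.sigma_κ_ne_zero i) (hxi ▸ hgen.sigma_xi_ne_zero n m h)
    (hxi ▸ hgen.sigma_xi_add_κ_ne_zero i n m h)
  rw [EllLattice.Phi_neg_left, ← hxi] at hchi
  rw [DK, mulVec_diagonal, Pi.neg_apply, r_apply, r_apply, hstep.wave_eq]
  linear_combination D.wave i n m h * hchi

lemma s_vecMul_DK' (hstep : D.IsStep y n m h n' m' h') (hgen : D.Generic extra) :
    D.s n' m' h' ᵥ* D.DK' y n m h = D.s n m h := by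
  ext j
  have hchi := EllLattice.Phi_mul_Phi_eq_Phi_add_mul_chi (hgen.sigma_xi_ne_zero n m h)
    hstep.sigma_ne_zero (hgen.sigma_κ'_ne_zero j) (hstep.xi_eq ▸ hgen.sigma_xi_ne_zero n' m' h')
    (hstep.xi_eq ▸ hgen.sigma_xi_add_κ'_ne_zero j n' m' h')
  rw [DK', vecMul_diagonal, s_apply, s_apply, hstep.dualWave_eq, hstep.xi_eq]
  linear_combination -D.dualWave j n' m' h' * hchi

lemma V_neg_eq (hstep : D.IsStep y n m h n' m' h') (hgen : D.Generic extra)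
    (hχ : ∀ i, D.L.chi (-y) (D.κ i) (D.xi n' m' h') ≠ 0) :
    D.V (-y) n' m' h' =
      1 + D.s n' m' h' ⬝ᵥ ((1 + D.C * D.M n' m' h')⁻¹ *ᵥ (D.C *ᵥ D.r n m h)) := by
  have hDK : IsUnit (D.DK (-y) n' m' h').det :=
    (isUnit_iff_isUnit_det _).1 (isUnit_diagonal.2 (Pi.isUnit_iff.2 fun i => (hχ i).isUnit))
  rw [V, ← hstep.DK_neg_mulVec_r hgen, mulVec_mulVec _ (D.DK (-y) n' m' h')⁻¹,
    nonsing_inv_mul _ hDK, one_mulVec, mulVec_neg, mulVec_neg, dotProduct_neg, sub_neg_eq_add]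

lemma W_eq (hstep : D.IsStep y n m h n' m' h') (hgen : D.Generic extra)
    (hχ : ∀ j, D.L.chi y (D.κ' j) (D.xi n m h) ≠ 0) :
    D.W y n m h =
      1 - D.s n' m' h' ⬝ᵥ (D.C *ᵥ ((1 + D.M n m h * D.C)⁻¹ *ᵥ D.r n m h)) := by
  have hDK' : IsUnit (D.DK' y n m h).det :=
    (isUnit_iff_isUnit_det _).1 (isUnit_diagonal.2 (Pi.isUnit_iff.2 fun j => (hχ j).isUnit))
  rw [W, ← hstep.s_vecMul_DK' hgen, dotProduct_mulVec, vecMul_vecMul, mul_nonsing_inv _ hDK',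
    vecMul_one]

lemma τ_eq_V_neg_mul (hstep : D.IsStep y n m h n' m' h') (hgen : D.Generic extra)
    (hInv : IsUnit (1 + D.M n' m' h' * D.C).det)
    (hχ : ∀ i, D.L.chi (-y) (D.κ i) (D.xi n' m' h') ≠ 0) :
    D.τ n m h = D.V (-y) n' m' h' * D.τ n' m' h' := by
  rw [τ, ← sub_add_cancel (D.M n m h) (vecMulVec (D.r n m h) (D.s n' m' h')),
    ← hstep.M_eq_sub_vecMulVec hgen, det_one_add_add_vecMulVec_mul hInv, hstep.V_neg_eq hgen hχ,
    mulVec_mulVec, mul_inv_one_add_mul hInv, mulVec_mulVec, τ]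

lemma τ_eq_W_mul (hstep : D.IsStep y n m h n' m' h') (hgen : D.Generic extra)
    (hInv : IsUnit (1 + D.M n m h * D.C).det)
    (hχ : ∀ j, D.L.chi y (D.κ' j) (D.xi n m h) ≠ 0) :
    D.τ n' m' h' = D.W y n m h * D.τ n m h := by
  rw [τ, hstep.M_eq_sub_vecMulVec hgen, sub_eq_add_neg, ← neg_vecMulVec,
    det_one_add_add_vecMulVec_mul hInv, hstep.W_eq hgen hχ, mulVec_neg, mulVec_neg,
    dotProduct_neg, ← sub_eq_add_neg, τ]

end IsStep

end KPData

/-- The τ-function obeys `τ = Ṽ_{−δ} τ̃`, `τ = V̂_{−ε} τ̂`, `τ = V̄_{−λ} τ̄`;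
in particular, whenever `τ ≠ 0`, `W_δ·Ṽ_{−δ} = 1`. -/
theorem tau_reverse_shift_relations {N N' : ℕ} (D : KPData N N')
    (hρ0 : ∀ i, D.ρ0 i ≠ 0) (hν0 : ∀ j, D.ν0 j ≠ 0)
    (hgen : D.Generic ![])
    (hInv : ∀ n m h : ℤ, IsUnit ((1 + D.M n m h * D.C).det))
    (hχδ : ∀ (n m h : ℤ) (i : Fin N), D.L.chi (-D.del) (D.κ i) (D.xi n m h) ≠ 0)
    (hχε : ∀ (n m h : ℤ) (i : Fin N), D.L.chi (-D.eps) (D.κ i) (D.xi n m h) ≠ 0)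
    (hχl : ∀ (n m h : ℤ) (i : Fin N), D.L.chi (-D.lam) (D.κ i) (D.xi n m h) ≠ 0)
    (hχδ' : ∀ (n m h : ℤ) (j : Fin N'), D.L.chi D.del (D.κ' j) (D.xi n m h) ≠ 0) :
    ∀ n m h : ℤ,
      D.τ n m h = D.V (-D.del) (n + 1) m h * D.τ (n + 1) m h ∧
      D.τ n m h = D.V (-D.eps) n (m + 1) h * D.τ n (m + 1) h ∧
      D.τ n m h = D.V (-D.lam) n m (h + 1) * D.τ n m (h + 1) ∧
      (D.τ n m h ≠ 0 → D.W D.del n m h * D.V (-D.del) (n + 1) m h = 1) := by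
  intro n m h
  have hτδ := (hgen.isStep_del n m h).τ_eq_V_neg_mul hgen (hInv _ _ _) (hχδ _ _ _)
  have hWδ := (hgen.isStep_del n m h).τ_eq_W_mul hgen (hInv _ _ _) (hχδ' _ _ _)
  refine ⟨hτδ, (hgen.isStep_eps n m h).τ_eq_V_neg_mul hgen (hInv _ _ _) (hχε _ _ _),
    (hgen.isStep_lam n m h).τ_eq_V_neg_mul hgen (hInv _ _ _) (hχl _ _ _),
    fun hτ => mul_right_cancel₀ hτ ?_⟩
  calc D.W D.del n m h * D.V (-D.del) (n + 1) m h * D.τ n m h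
      = D.V (-D.del) (n + 1) m h * D.τ (n + 1) m h := by rw [hWδ]; ring
    _ = 1 * D.τ n m h := by rw [← hτδ, one_mul]
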